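/- arXiv:1509.02106 — 2 statements merged into one kernel-verified Lean document; each statement's English description precedes it below -/
import Mathlib

section
/- Let f ∈ ℂ[x,y,z,w] be a reduced homogeneous polynomial of degree d defining a surface D: f = 0 in P³, tame with respect to the pair ρ1, ρ2 of degrees e1 ≤ e2, and set e3 = d − 1 − e1 − e2 with e3 ≥ e2. Then the following are equivalent: (i) D is a free surface with exponents e1, e2, e3; (ii) ar(f)_{e3} > binom(e3−e1+3,3) + binom(e3−e2+3,3); (iii) ar(f)_{e3} = binom(e3−e1+3,3) + binom(e3−e2+3,3) + 1; (iv) some homogeneous syzygy of degree e3 does not belong to S·ρ1 + S·ρ2 (i.e., the first degree where a generator of AR(f) beyond ρ1, ρ2 is needed equals e3). -/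
open MvPolynomial Matrix

noncomputable section

/-- The polynomial ring `S = ℂ[x,y,z,w]`. -/
abbrev S4 : Type := MvPolynomial (Fin 4) ℂ

/-- The `S`-linear map sending `ρ = (α,β,γ,δ)` to `α fₓ + β f_y + γ f_z + δ f_w`. -/
def jacPair (f : S4) : (Fin 4 → S4) →ₗ[S4] S4 where
  toFun ρ := ∑ i, ρ i * pderiv i f
  map_add' a b := by simp [add_mul, Finset.sum_add_distrib]
  map_smul' c a := by simp [Finset.mul_sum, mul_assoc]

/-- `AR(f)`: the `S`-module of all Jacobian syzygies of `f`. -/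
def AR4 (f : S4) : Submodule S4 (Fin 4 → S4) := LinearMap.ker (jacPair f)

/-- A vector of polynomials is homogeneous of degree `q` if each component is. -/
def VecHomog (ρ : Fin 4 → S4) (q : ℕ) : Prop := ∀ i, (ρ i).IsHomogeneous q

/-- `AR(f)_k`, the degree-`k` homogeneous part of `AR(f)`, as a `ℂ`-subspace. -/
def ARgr (f : S4) (k : ℕ) : Submodule ℂ (Fin 4 → S4) :=
  (AR4 f).restrictScalars ℂ ⊓ Submodule.pi Set.univ (fun _ => homogeneousSubmodule (Fin 4) ℂ k)

/-- `ar(f)_k = dim_ℂ AR(f)_k`. -/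
def arDim (f : S4) (k : ℕ) : ℕ := Module.finrank ℂ (ARgr f k)

/-- `ar(f)_q` for an integer index, with the convention that it vanishes for `q < 0`. -/
def arZ (f : S4) (q : ℤ) : ℕ := if 0 ≤ q then arDim f q.toNat else 0

/-- The Jacobian ideal of `f`. -/
def JacIdeal (f : S4) : Ideal S4 := Ideal.span (Set.range fun i : Fin 4 => pderiv i f)

/-- `m(f)_k = dim_ℂ M(f)_k`, the dimension of the degree-`k` part of the Milnor algebra. -/
def milnor4 (f : S4) (k : ℕ) : ℕ :=
  Module.finrank ℂ ((homogeneousSubmodule (Fin 4) ℂ k).map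
    (Submodule.mkQ ((JacIdeal f).restrictScalars ℂ)))

/-- `binom(m,3)` with the convention that it is `0` for `m < 3`. -/
def binom3 (m : ℤ) : ℕ := m.toNat.choose 3

/-- All four `3×3` minors of the `3×4` matrix with rows `ρ1, ρ2, ρ` vanish. -/
def MinorsVanish3 (ρ1 ρ2 ρ : Fin 4 → S4) : Prop :=
  ∀ j : Fin 4,
    (Matrix.of fun i k => ![ρ1, ρ2, ρ] i (j.succAbove k) : Matrix (Fin 3) (Fin 3) S4).det = 0

/-- `D : f = 0` is tame with respect to `ρ1, ρ2`: every homogeneous syzygy `ρ` for which all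
`3×3` minors of the matrix with rows `ρ1, ρ2, ρ` vanish lies in `S·ρ1 + S·ρ2`. -/
def TamePair (f : S4) (ρ1 ρ2 : Fin 4 → S4) : Prop :=
  ∀ ρ ∈ AR4 f, ∀ q : ℕ, VecHomog ρ q → MinorsVanish3 ρ1 ρ2 ρ →
    ∃ a b : S4, ρ = a • ρ1 + b • ρ2

/-- `ρ1` is a nonzero homogeneous syzygy of minimal degree `e1`, and `ρ2` is a homogeneous
syzygy of minimal degree `e2 ≥ e1` among the homogeneous syzygies not in `S·ρ1`. -/
def MinimalPair (f : S4) (ρ1 ρ2 : Fin 4 → S4) (e1 e2 : ℕ) : Prop :=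
  ρ1 ∈ AR4 f ∧ ρ1 ≠ 0 ∧ VecHomog ρ1 e1 ∧
  (∀ ρ ∈ AR4 f, ∀ q : ℕ, ρ ≠ 0 → VecHomog ρ q → e1 ≤ q) ∧
  ρ2 ∈ AR4 f ∧ VecHomog ρ2 e2 ∧ e1 ≤ e2 ∧ (∀ a : S4, ρ2 ≠ a • ρ1) ∧
  (∀ ρ ∈ AR4 f, ∀ q : ℕ, VecHomog ρ q → (∀ a : S4, ρ ≠ a • ρ1) → e2 ≤ q)

/-- `D : f = 0` is a free surface with exponents `d1 ≤ d2 ≤ d3`: `AR(f)` is a free graded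
`S`-module with a homogeneous basis of degrees `d1, d2, d3`. -/
def IsFreeWith (f : S4) (d1 d2 d3 : ℕ) : Prop :=
  d1 ≤ d2 ∧ d2 ≤ d3 ∧
  ∃ ρ1 ρ2 ρ3 : Fin 4 → S4,
    ρ1 ∈ AR4 f ∧ ρ2 ∈ AR4 f ∧ ρ3 ∈ AR4 f ∧
    VecHomog ρ1 d1 ∧ VecHomog ρ2 d2 ∧ VecHomog ρ3 d3 ∧
    (∀ ρ ∈ AR4 f, ∃ a b c : S4, ρ = a • ρ1 + b • ρ2 + c • ρ3) ∧
    (∀ a b c : S4, a • ρ1 + b • ρ2 + c • ρ3 = 0 → a = 0 ∧ b = 0 ∧ c = 0)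

/-- `D : f = 0` is a nearly free surface with exponents `d1 ≤ d2 ≤ d3` (`d4 = d3`):
`AR(f)` is generated by four homogeneous syzygies of degrees `d1, d2, d3, d3`,
with `d3 = d - (d1 + d2)`, whose module of relations is generated by a single relation
`a₁ρ₁ + a₂ρ₂ + a₃ρ₃ + a₄ρ₄ = 0` with `a₁, a₂, a₃, a₄` homogeneous of degrees
`d3-d1+1, d3-d2+1, 1, 1`. -/
def IsNearlyFreeWith (f : S4) (d d1 d2 d3 : ℕ) : Prop :=
  d1 ≤ d2 ∧ d2 ≤ d3 ∧ d1 + d2 + d3 = d ∧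
  ∃ (ρ : Fin 4 → Fin 4 → S4) (a : Fin 4 → S4),
    (∀ i, ρ i ∈ AR4 f) ∧
    VecHomog (ρ 0) d1 ∧ VecHomog (ρ 1) d2 ∧ VecHomog (ρ 2) d3 ∧ VecHomog (ρ 3) d3 ∧
    (∀ σ ∈ AR4 f, ∃ b : Fin 4 → S4, σ = ∑ i, b i • ρ i) ∧
    (a 0).IsHomogeneous (d3 - d1 + 1) ∧ (a 1).IsHomogeneous (d3 - d2 + 1) ∧
    (a 2).IsHomogeneous 1 ∧ (a 3).IsHomogeneous 1 ∧
    a ≠ 0 ∧ (∑ i, a i • ρ i) = 0 ∧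
    (∀ b : Fin 4 → S4, (∑ i, b i • ρ i) = 0 → ∃ c : S4, b = c • a)

/-- `D : f = 0` is tame: it is tame with respect to some pair `ρ1, ρ2` chosen as in the paper. -/
def IsTame (f : S4) : Prop :=
  ∃ (ρ1 ρ2 : Fin 4 → S4) (e1 e2 : ℕ), MinimalPair f ρ1 ρ2 e1 e2 ∧ TamePair f ρ1 ρ2

/-- The `4×4` matrix with rows the Euler vector field `(x,y,z,w)` and `ρ1, ρ2, ρ`. -/
def EMat (ρ1 ρ2 ρ : Fin 4 → S4) : Matrix (Fin 4) (Fin 4) S4 :=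
  Matrix.of ![fun i => X i, ρ1, ρ2, ρ]

lemma aux_pderiv_dvd {p : S4} {i : Fin 4} (h : p ∣ pderiv i p) : pderiv i p = 0 := by
  by_contra hne
  obtain ⟨q, hq⟩ := h
  have hp : p ≠ 0 := by rintro rfl; simp at hne
  have hq0 : q ≠ 0 := by rintro rfl; exact hne (by simpa using hq)
  have h1 : p.totalDegree ≤ (pderiv i p).totalDegree := by
    rw [hq, totalDegree_mul_of_isDomain hp hq0]; omega
  have hp0 : 0 < p.totalDegree := by
    by_contra h0
    have : p.totalDegree = 0 := by omega
    rw [totalDegree_eq_zero_iff_eq_C] at this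
    rw [this, pderiv_C] at hne
    exact hne rfl
  have h2 : (pderiv i p).totalDegree < p.totalDegree := by
    rw [totalDegree, Finset.sup_lt_iff (by simpa using hp0)]
    intro m hm
    rw [mem_support_iff, coeff_pderiv] at hm
    have hm' : m + Finsupp.single i 1 ∈ p.support := by
      rw [mem_support_iff]; exact left_ne_zero_of_mul hm
    have := le_totalDegree hm'
    rw [Finsupp.sum_add_index' (by simp) (by simp)] at this
    simp at this
    omega
  omega

lemma aux_const {p : S4} (h : ∀ i, pderiv i p = 0) : p = C (coeff 0 p) := by
  ext m
  rw [coeff_C]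
  split_ifs with hm
  · rw [hm]
  · obtain ⟨i, hi⟩ : ∃ i, m i ≠ 0 := by
      by_contra hh; push Not at hh; exact hm (by ext i; simp [hh i])
    have := coeff_pderiv (i := i) p (m - Finsupp.single i 1)
    rw [h i, Finsupp.sub_add_single_one_cancel hi] at this
    simp only [coeff_zero] at this
    rcases mul_eq_zero.mp this.symm with h1 | h1
    · exact h1
    · exfalso; exact_mod_cast h1

lemma aux_sqfree {f g : S4} (hf : Squarefree f) (h : ∀ p, Prime p → p ∣ f → p ∣ g) : f ∣ g := by
  classical
  by_cases hg : g = 0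
  · simp [hg]
  let _ : StrongNormalizationMonoid S4 := UniqueFactorizationMonoid.strongNormalizationMonoid
  have hf0 : f ≠ 0 := hf.ne_zero
  rw [UniqueFactorizationMonoid.dvd_iff_normalizedFactors_le_normalizedFactors hf0 hg,
    Multiset.le_iff_subset
      ((UniqueFactorizationMonoid.squarefree_iff_nodup_normalizedFactors hf0).1 hf)]
  intro p hp
  have hpp := UniqueFactorizationMonoid.prime_of_normalized_factor p hp
  have hd := h p hpp (UniqueFactorizationMonoid.dvd_of_mem_normalizedFactors hp)
  rw [UniqueFactorizationMonoid.mem_normalizedFactors_iff' hf0] at hp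
  rw [UniqueFactorizationMonoid.mem_normalizedFactors_iff' hg]
  exact ⟨hp.1, hp.2.1, hd⟩

lemma aux_dvd {f g : S4} (hf : Squarefree f) (h : ∀ i, f ∣ g * pderiv i f) : f ∣ g := by
  apply aux_sqfree hf
  rintro p hp ⟨q, rfl⟩
  by_contra hpg
  have hpq : ¬ p ∣ q := by
    rintro ⟨r, rfl⟩
    exact hp.not_isUnit (hf p ⟨r, by ring⟩)
  have h0 : ∀ i, pderiv i p = 0 := by
    intro i
    apply aux_pderiv_dvd
    have h1 : p ∣ g * pderiv i (p * q) := (Dvd.intro _ rfl).trans (h i)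
    have h2 := (hp.dvd_or_dvd h1).resolve_left hpg
    rw [pderiv_mul, (Dvd.intro _ rfl : p ∣ p * pderiv i q) |> dvd_add_left] at h2
    exact (hp.dvd_or_dvd h2).resolve_right hpq
  have hc := aux_const h0
  apply hp.not_isUnit
  rw [hc]
  have : coeff 0 p ≠ 0 := by
    intro h; rw [h] at hc; exact hp.ne_zero (by simpa using hc)
  exact (isUnit_iff_ne_zero.2 this).map C

lemma aux_mulVec {f : S4} {d : ℕ} (hf : f.IsHomogeneous d) {ρ1 ρ2 ρ3 : Fin 4 → S4}
    (h1 : ρ1 ∈ AR4 f) (h2 : ρ2 ∈ AR4 f) (h3 : ρ3 ∈ AR4 f) :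
    EMat ρ1 ρ2 ρ3 *ᵥ (fun i => pderiv i f) = Pi.single 0 (d • f) := by
  ext1 i
  fin_cases i
  · simpa [EMat, mulVec, dotProduct] using hf.sum_X_mul_pderiv
  · simpa [EMat, mulVec, dotProduct, AR4, jacPair] using h1
  · simpa [EMat, mulVec, dotProduct, AR4, jacPair] using h2
  · simpa [EMat, mulVec, dotProduct, AR4, jacPair] using h3

lemma aux_det_mul {f : S4} {d : ℕ} (hf : f.IsHomogeneous d) {ρ1 ρ2 ρ3 : Fin 4 → S4}
    (h1 : ρ1 ∈ AR4 f) (h2 : ρ2 ∈ AR4 f) (h3 : ρ3 ∈ AR4 f) (i : Fin 4) :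
    (EMat ρ1 ρ2 ρ3).det * pderiv i f = (EMat ρ1 ρ2 ρ3).adjugate i 0 * (d • f) := by
  have h := congrArg (fun v => ((EMat ρ1 ρ2 ρ3).adjugate *ᵥ v) i) (aux_mulVec hf h1 h2 h3)
  simp only [mulVec_mulVec, adjugate_mul, smul_mulVec, one_mulVec, mulVec_single] at h
  simpa using h

lemma aux_f_dvd {f : S4} {d : ℕ} (hf : f.IsHomogeneous d) (hred : Squarefree f)
    {ρ1 ρ2 ρ3 : Fin 4 → S4}
    (h1 : ρ1 ∈ AR4 f) (h2 : ρ2 ∈ AR4 f) (h3 : ρ3 ∈ AR4 f) : f ∣ (EMat ρ1 ρ2 ρ3).det := by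
  apply aux_dvd hred
  intro i
  rw [aux_det_mul hf h1 h2 h3 i, nsmul_eq_mul]
  exact ⟨(EMat ρ1 ρ2 ρ3).adjugate i 0 * d, by ring⟩

lemma aux_det_homog {ρ1 ρ2 ρ3 : Fin 4 → S4} {a b c : ℕ} (h1 : VecHomog ρ1 a)
    (h2 : VecHomog ρ2 b) (h3 : VecHomog ρ3 c) :
    (EMat ρ1 ρ2 ρ3).det.IsHomogeneous (1 + a + b + c) := by
  rw [det_apply]
  apply IsHomogeneous.sum
  intro σ _
  have hrow : ∀ i j, (EMat ρ1 ρ2 ρ3 i j).IsHomogeneous (![1, a, b, c] i) := by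
    intro i j
    fin_cases i
    · exact isHomogeneous_X _ _
    · exact h1 j
    · exact h2 j
    · exact h3 j
  have hp : (∏ i, EMat ρ1 ρ2 ρ3 (σ i) i).IsHomogeneous (1 + a + b + c) := by
    have := IsHomogeneous.prod Finset.univ (fun i => EMat ρ1 ρ2 ρ3 (σ i) i)
      (fun i => ![1, a, b, c] (σ i)) (fun i _ => hrow _ _)
    rw [Equiv.sum_comp σ ![1, a, b, c], Fin.sum_univ_four] at this
    exact this
  rcases Int.units_eq_one_or (Equiv.Perm.sign σ) with h | h
  · rw [h]; simpa using hp
  · rw [h]; simpa using hp.neg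

lemma aux_det_ne {f : S4} {d : ℕ} (hd : 1 ≤ d) (hf : f.IsHomogeneous d) (hf0 : f ≠ 0)
    {ρ1 ρ2 ρ3 : Fin 4 → S4}
    (h1 : ρ1 ∈ AR4 f) (h2 : ρ2 ∈ AR4 f) (h3 : ρ3 ∈ AR4 f)
    (hm : ¬ MinorsVanish3 ρ1 ρ2 ρ3) : (EMat ρ1 ρ2 ρ3).det ≠ 0 := by
  intro h0
  apply hm
  intro j
  have h := aux_det_mul hf h1 h2 h3 j
  rw [h0, zero_mul, nsmul_eq_mul] at h
  have hdf : ((d : S4) * f) ≠ 0 := mul_ne_zero (by exact_mod_cast (by omega : d ≠ 0)) hf0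
  have ha := (mul_eq_zero.mp h.symm).resolve_right hdf
  rw [adjugate_fin_succ_eq_det_submatrix] at ha
  have hs : (-1 : S4) ^ ((0 : Fin 4) + j : ℕ) ≠ 0 := pow_ne_zero _ (by simp)
  have ha' := (mul_eq_zero.mp ha).resolve_left hs
  rw [← ha']
  congr 1

lemma aux_det_eq {f : S4} {d : ℕ} (hf : f.IsHomogeneous d) (hred : Squarefree f)
    {ρ1 ρ2 ρ3 : Fin 4 → S4} {a b c : ℕ}
    (h1 : ρ1 ∈ AR4 f) (h2 : ρ2 ∈ AR4 f) (h3 : ρ3 ∈ AR4 f) (g1 : VecHomog ρ1 a)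
    (g2 : VecHomog ρ2 b) (g3 : VecHomog ρ3 c) (hdeg : a + b + c + 1 = d)
    (h0 : (EMat ρ1 ρ2 ρ3).det ≠ 0) :
    ∃ k : ℂ, k ≠ 0 ∧ (EMat ρ1 ρ2 ρ3).det = f * C k := by
  obtain ⟨q, hq⟩ := aux_f_dvd hf hred h1 h2 h3
  have hq0 : q ≠ 0 := by rintro rfl; simp at hq; exact h0 hq
  have hh := (aux_det_homog g1 g2 g3).totalDegree h0
  rw [hq, totalDegree_mul_of_isDomain hred.ne_zero hq0, hf.totalDegree hred.ne_zero] at hh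
  have hz : q.totalDegree = 0 := by omega
  rw [totalDegree_eq_zero_iff_eq_C] at hz
  refine ⟨coeff 0 q, ?_, by rw [← hz, hq]⟩
  intro h; rw [h] at hz; exact hq0 (by simpa using hz)

lemma aux_saito_span {f : S4} {d : ℕ} (hd : 1 ≤ d) (hf : f.IsHomogeneous d) (hred : Squarefree f)
    {ρ1 ρ2 ρ3 : Fin 4 → S4}
    (h1 : ρ1 ∈ AR4 f) (h2 : ρ2 ∈ AR4 f) (h3 : ρ3 ∈ AR4 f) {k : ℂ} (hk : k ≠ 0)
    (hdet : (EMat ρ1 ρ2 ρ3).det = f * C k) (σ : Fin 4 → S4) (hσ : σ ∈ AR4 f) :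
    ∃ a b c : S4, σ = a • ρ1 + b • ρ2 + c • ρ3 := by
  set M := EMat ρ1 ρ2 ρ3 with hM
  have hf0 := hred.ne_zero
  have hc := mulVec_cramer Mᵀ σ
  rw [det_transpose] at hc
  have hu1 : M.updateRow 1 σ = EMat σ ρ2 ρ3 := by
    ext1 i j; fin_cases i <;> rfl
  have hu2 : M.updateRow 2 σ = EMat ρ1 σ ρ3 := by
    ext1 i j; fin_cases i <;> rfl
  have hu3 : M.updateRow 3 σ = EMat ρ1 ρ2 σ := by
    ext1 i j; fin_cases i <;> rfl
  obtain ⟨a, ha⟩ := aux_f_dvd hf hred hσ h2 h3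
  obtain ⟨b, hb⟩ := aux_f_dvd hf hred h1 hσ h3
  obtain ⟨c, hc'⟩ := aux_f_dvd hf hred h1 h2 hσ
  have c1 : cramer Mᵀ σ 1 = f * a := by rw [cramer_transpose_apply, hu1, ha]
  have c2 : cramer Mᵀ σ 2 = f * b := by rw [cramer_transpose_apply, hu2, hb]
  have c3 : cramer Mᵀ σ 3 = f * c := by rw [cramer_transpose_apply, hu3, hc']
  have c0 : cramer Mᵀ σ 0 = 0 := by
    have e := congrArg (fun v => v ⬝ᵥ (fun i => pderiv i f)) hc
    simp only [mulVec_transpose, ← dotProduct_mulVec, hM, aux_mulVec hf h1 h2 h3] at e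
    rw [smul_dotProduct] at e
    have hz : σ ⬝ᵥ (fun i => pderiv i f) = 0 := by
      simpa [dotProduct, AR4, jacPair] using hσ
    rw [hz, dotProduct_single, smul_zero, nsmul_eq_mul] at e
    have hdf : ((d : S4) * f) ≠ 0 := mul_ne_zero (by exact_mod_cast (by omega : d ≠ 0)) hf0
    exact (mul_eq_zero.mp e).resolve_right hdf
  refine ⟨C k⁻¹ * a, C k⁻¹ * b, C k⁻¹ * c, ?_⟩
  ext1 j
  have e := congrFun hc j
  simp only [mulVec, dotProduct, Fin.sum_univ_four, c0, c1, c2, c3, hdet] at e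
  have e' : f * (C k * σ j) = f * (a * ρ1 j + b * ρ2 j + c * ρ3 j) := by
    simp [hM, EMat] at e
    linear_combination -e
  have e2 := mul_left_cancel₀ hf0 e'
  have hkk : (C k⁻¹ : S4) * C k = 1 := by rw [← C_mul, inv_mul_cancel₀ hk, C_1]
  simp only [Pi.add_apply, Pi.smul_apply, smul_eq_mul]
  linear_combination (-σ j) * hkk + C k⁻¹ * e2

lemma aux_indep {ρ1 ρ2 ρ3 : Fin 4 → S4} (h0 : (EMat ρ1 ρ2 ρ3).det ≠ 0) (a b c : S4)
    (h : a • ρ1 + b • ρ2 + c • ρ3 = 0) : a = 0 ∧ b = 0 ∧ c = 0 := by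
  have hv : ![0, a, b, c] = 0 := by
    apply eq_zero_of_vecMul_eq_zero h0
    ext1 j
    have := congrFun h j
    simp [vecMul, dotProduct, Fin.sum_univ_four, EMat] at this ⊢
    exact this
  exact ⟨by simpa using congrFun hv 1, by simpa using congrFun hv 2, by simpa using congrFun hv 3⟩

lemma aux_comp {a p : S4} {i n : ℕ} (hp : p.IsHomogeneous i) (h : i ≤ n) :
    homogeneousComponent n (a * p) = homogeneousComponent (n - i) a * p := by
  let _ : GradedAlgebra (homogeneousSubmodule (Fin 4) ℂ) := gradedAlgebra
  have := DirectSum.coe_decompose_mul_of_right_mem_of_le (homogeneousSubmodule (Fin 4) ℂ)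
    (a := a) (b := p) (n := n) (i := i) hp h
  have key : ∀ (q : S4) (m : ℕ), (DirectSum.decompose (homogeneousSubmodule (Fin 4) ℂ) q m : S4)
      = homogeneousComponent m q := fun q m => decomposition.decompose'_apply q m
  rwa [key, key] at this

lemma aux_finrank (n : ℕ) :
    Module.finrank ℂ (homogeneousSubmodule (Fin 4) ℂ n) = (n + 3).choose 3 := by
  have e : homogeneousSubmodule (Fin 4) ℂ n
      = restrictSupport ℂ {m : Fin 4 →₀ ℕ | m.degree = n} :=
    homogeneousSubmodule_eq_finsupp_supported _ _ _
  rw [e, Module.finrank_eq_nat_card_basis (basisRestrictSupport ℂ _)]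
  have hs : {m : Fin 4 →₀ ℕ | m.degree = n} = ↑(Finset.finsuppAntidiag (Finset.univ : Finset (Fin 4)) n) := by
    ext m; simp [Finsupp.degree_eq_sum]
  rw [hs]
  rw [Nat.card_eq_fintype_card]
  simp [Finset.card_finsuppAntidiag_nat_eq_choose]
  rw [add_comm 3 n, Nat.choose_symm_add]

instance aux_fin (n : ℕ) : Module.Finite ℂ (homogeneousSubmodule (Fin 4) ℂ n) :=
  Module.Finite.iff_fg.2 (homogeneousSubmodule_fg _ _ _)

/-- The map `(a, b) ↦ a ρ1 + b ρ2` on homogeneous coefficients. -/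
def auxMap (ρ1 ρ2 : Fin 4 → S4) (m n : ℕ) :
    (homogeneousSubmodule (Fin 4) ℂ m × homogeneousSubmodule (Fin 4) ℂ n) →ₗ[ℂ] (Fin 4 → S4) where
  toFun x := (x.1 : S4) • ρ1 + (x.2 : S4) • ρ2
  map_add' x y := by simp [add_smul]; abel
  map_smul' c x := by simp

/-- The map `(a, b, c) ↦ a ρ1 + b ρ2 + c ρ3` on homogeneous coefficients. -/
def auxMap3 (ρ1 ρ2 ρ3 : Fin 4 → S4) (m n l : ℕ) :
    (homogeneousSubmodule (Fin 4) ℂ m × homogeneousSubmodule (Fin 4) ℂ n ×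
      homogeneousSubmodule (Fin 4) ℂ l) →ₗ[ℂ] (Fin 4 → S4) where
  toFun x := (x.1 : S4) • ρ1 + (x.2.1 : S4) • ρ2 + (x.2.2 : S4) • ρ3
  map_add' x y := by simp [add_smul]; abel
  map_smul' c x := by simp

lemma aux_homog3 {ρ ρ1 ρ2 ρ3 : Fin 4 → S4} {e1 e2 e3 n : ℕ} (h : VecHomog ρ n)
    (g1 : VecHomog ρ1 e1) (g2 : VecHomog ρ2 e2) (g3 : VecHomog ρ3 e3)
    (l1 : e1 ≤ n) (l2 : e2 ≤ n) (l3 : e3 ≤ n) {a b c : S4}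
    (hρ : ρ = a • ρ1 + b • ρ2 + c • ρ3) :
    ρ = homogeneousComponent (n - e1) a • ρ1 + homogeneousComponent (n - e2) b • ρ2
      + homogeneousComponent (n - e3) c • ρ3 := by
  ext1 j
  have e := congrArg (homogeneousComponent n) (congrFun hρ j)
  rw [homogeneousComponent_of_mem (m := n) (n := n) (h j), if_pos rfl] at e
  rw [e]
  simp [aux_comp (g1 j) l1, aux_comp (g2 j) l2, aux_comp (g3 j) l3]

lemma aux_mem_ARgr {f : S4} {ρ : Fin 4 → S4} {k : ℕ} :
    ρ ∈ ARgr f k ↔ ρ ∈ AR4 f ∧ VecHomog ρ k := by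
  simp [ARgr, VecHomog, Submodule.mem_pi]

lemma aux_binom {a b : ℕ} (h : a ≤ b) : binom3 ((b : ℤ) - a + 3) = (b - a + 3).choose 3 := by
  unfold binom3
  congr 1
  omega

lemma aux_upper {f : S4} {e1 e2 e3 : ℕ} {ρ1 ρ2 : Fin 4 → S4}
    (g1 : VecHomog ρ1 e1) (g2 : VecHomog ρ2 e2) (l1 : e1 ≤ e3) (l2 : e2 ≤ e3)
    (h : ∀ ρ ∈ AR4 f, VecHomog ρ e3 → ∃ a b : S4, ρ = a • ρ1 + b • ρ2) :
    arDim f e3 ≤ binom3 ((e3 : ℤ) - e1 + 3) + binom3 ((e3 : ℤ) - e2 + 3) := by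
  rw [aux_binom l1, aux_binom l2, ← aux_finrank, ← aux_finrank, ← Module.finrank_prod]
  have hle : ARgr f e3 ≤ LinearMap.range (auxMap ρ1 ρ2 (e3 - e1) (e3 - e2)) := by
    intro ρ hρ
    rw [aux_mem_ARgr] at hρ
    obtain ⟨a, b, hab⟩ := h ρ hρ.1 hρ.2
    have hz : VecHomog (0 : Fin 4 → S4) e3 := fun i => isHomogeneous_zero _ _ _
    have := aux_homog3 hρ.2 g1 g2 hz l1 l2 le_rfl (a := a) (b := b) (c := 0) (by simpa using hab)
    exact ⟨(⟨_, homogeneousComponent_mem _ a⟩, ⟨_, homogeneousComponent_mem _ b⟩), by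
      simpa [auxMap] using this.symm⟩
  exact (Submodule.finrank_mono hle).trans (LinearMap.finrank_range_le _)

lemma aux_smul_homog {ρ : Fin 4 → S4} {a : S4} {m e n : ℕ} (h : VecHomog ρ e)
    (ha : a.IsHomogeneous m) (hn : m + e = n) : VecHomog (a • ρ) n := by
  intro i; subst hn; exact ha.mul (h i)

lemma aux_exact {f : S4} {e1 e2 e3 : ℕ} {ρ1 ρ2 ρ3 : Fin 4 → S4}
    (h1 : ρ1 ∈ AR4 f) (h2 : ρ2 ∈ AR4 f) (h3 : ρ3 ∈ AR4 f)
    (g1 : VecHomog ρ1 e1) (g2 : VecHomog ρ2 e2) (g3 : VecHomog ρ3 e3) (l1 : e1 ≤ e3) (l2 : e2 ≤ e3)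
    (hs : ∀ ρ ∈ AR4 f, ∃ a b c : S4, ρ = a • ρ1 + b • ρ2 + c • ρ3)
    (hi : ∀ a b c : S4, a • ρ1 + b • ρ2 + c • ρ3 = 0 → a = 0 ∧ b = 0 ∧ c = 0) :
    arDim f e3 = binom3 ((e3 : ℤ) - e1 + 3) + binom3 ((e3 : ℤ) - e2 + 3) + 1 := by
  have hle : ARgr f e3 = LinearMap.range (auxMap3 ρ1 ρ2 ρ3 (e3 - e1) (e3 - e2) (e3 - e3)) := by
    ext ρ
    rw [aux_mem_ARgr]
    constructor
    · rintro hρ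
      obtain ⟨a, b, c, hab⟩ := hs ρ hρ.1
      have := aux_homog3 hρ.2 g1 g2 g3 l1 l2 le_rfl hab
      exact ⟨(⟨_, homogeneousComponent_mem _ a⟩, ⟨_, homogeneousComponent_mem _ b⟩,
        ⟨_, homogeneousComponent_mem _ c⟩), this.symm⟩
    · rintro ⟨⟨a, b, c⟩, rfl⟩
      refine ⟨add_mem (add_mem (Submodule.smul_mem _ _ h1) (Submodule.smul_mem _ _ h2))
        (Submodule.smul_mem _ _ h3), fun i => ?_⟩
      exact ((aux_smul_homog g1 a.2 (by omega) i).add (aux_smul_homog g2 b.2 (by omega) i)).add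
        (aux_smul_homog g3 c.2 (by omega) i)
  have hinj : Function.Injective (auxMap3 ρ1 ρ2 ρ3 (e3 - e1) (e3 - e2) (e3 - e3)) := by
    rw [injective_iff_map_eq_zero]
    rintro ⟨a, b, c⟩ h
    obtain ⟨ha, hb, hc⟩ := hi a b c h
    ext1
    · exact Subtype.ext ha
    · ext1
      · exact Subtype.ext hb
      · exact Subtype.ext hc
  rw [arDim, hle, LinearMap.finrank_range_of_inj hinj, Module.finrank_prod, Module.finrank_prod,
    aux_finrank, aux_finrank, aux_finrank, aux_binom l1, aux_binom l2]
  simp [add_assoc]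

/-- Three vectors in the span of two vectors are dependent. -/
lemma aux_dep (ρ1 ρ2 : Fin 4 → S4) (t : Fin 3 → Fin 4 → S4)
    (ht : ∀ i, ∃ a b : S4, t i = a • ρ1 + b • ρ2) : ¬ LinearIndependent S4 t := by
  intro h
  have hs : Set.range t ≤ Submodule.span S4 (Set.range ![ρ1, ρ2]) := by
    rintro _ ⟨i, rfl⟩
    obtain ⟨a, b, hab⟩ := ht i
    rw [hab]
    exact add_mem (Submodule.smul_mem _ _ (Submodule.subset_span ⟨0, rfl⟩))
      (Submodule.smul_mem _ _ (Submodule.subset_span ⟨1, rfl⟩))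
  have := linearIndependent_le_span_aux' t h (Set.range ![ρ1, ρ2]) hs
  have h2 : Fintype.card (Set.range ![ρ1, ρ2]) ≤ 2 := by
    simpa using Fintype.card_range_le ![ρ1, ρ2]
  rw [Fintype.card_fin] at this
  omega

lemma aux_free_iv {f : S4} {e1 e2 e3 : ℕ} (ρ1 ρ2 : Fin 4 → S4) (hfree : IsFreeWith f e1 e2 e3) :
    ∃ ρ ∈ AR4 f, VecHomog ρ e3 ∧ ¬ ∃ a b : S4, ρ = a • ρ1 + b • ρ2 := by
  obtain ⟨l12, l23, t1, t2, t3, h1, h2, h3, g1, g2, g3, -, hi⟩ := hfree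
  by_contra hcon
  push Not at hcon
  have x0 : ∀ n : ℕ, (X 0 : S4) ^ n ≠ 0 := fun n => pow_ne_zero _ (X_ne_zero _)
  have hx : ∀ n : ℕ, ((X 0 : S4) ^ n).IsHomogeneous n := fun n => isHomogeneous_X_pow _ _
  apply aux_dep ρ1 ρ2 ![(X 0 : S4) ^ (e3 - e1) • t1, (X 0 : S4) ^ (e3 - e2) • t2, t3]
  · intro i
    fin_cases i
    · exact hcon _ (Submodule.smul_mem _ _ h1) (aux_smul_homog g1 (hx _) (by omega))
    · exact hcon _ (Submodule.smul_mem _ _ h2) (aux_smul_homog g2 (hx _) (by omega))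
    · exact hcon _ h3 g3
  · rw [Fintype.linearIndependent_iff]
    intro c hc
    rw [Fin.sum_univ_three] at hc
    obtain ⟨ha, hb, hc⟩ := hi (c 0 * X 0 ^ (e3 - e1)) (c 1 * X 0 ^ (e3 - e2)) (c 2)
      (by simpa [mul_smul] using hc)
    intro i
    fin_cases i
    · exact (mul_eq_zero.mp ha).resolve_right (x0 _)
    · exact (mul_eq_zero.mp hb).resolve_right (x0 _)
    · exact hc

/-- **Corollary 3.4 (first part).** Equivalent characterizations of freeness: `D` is free
with exponents `e1, e2, e3` iff `ar(f)_{e3}` exceeds the expected dimension, iff it exceeds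
it by exactly one, iff some degree-`e3` syzygy lies outside `S·ρ1 + S·ρ2`. -/
theorem cor_3_4_a (f : S4) (d e1 e2 e3 : ℕ) (ρ1 ρ2 : Fin 4 → S4)
    (hd : 1 ≤ d) (hf : f.IsHomogeneous d) (hred : Squarefree f)
    (hmin : MinimalPair f ρ1 ρ2 e1 e2) (htame : TamePair f ρ1 ρ2)
    (he3 : e1 + e2 + e3 + 1 = d) (he23 : e2 ≤ e3) :
    (IsFreeWith f e1 e2 e3 ↔
      binom3 ((e3 : ℤ) - e1 + 3) + binom3 ((e3 : ℤ) - e2 + 3) < arDim f e3) ∧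
    (IsFreeWith f e1 e2 e3 ↔
      arDim f e3 = binom3 ((e3 : ℤ) - e1 + 3) + binom3 ((e3 : ℤ) - e2 + 3) + 1) ∧
    (IsFreeWith f e1 e2 e3 ↔
      ∃ ρ ∈ AR4 f, VecHomog ρ e3 ∧ ¬ ∃ a b : S4, ρ = a • ρ1 + b • ρ2) := by
  obtain ⟨h1, -, g1, -, h2, g2, l12, -, -⟩ := hmin
  have l13 : e1 ≤ e3 := l12.trans he23
  have hiv : (∃ ρ ∈ AR4 f, VecHomog ρ e3 ∧ ¬ ∃ a b : S4, ρ = a • ρ1 + b • ρ2) →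
      IsFreeWith f e1 e2 e3 ∧
      arDim f e3 = binom3 ((e3 : ℤ) - e1 + 3) + binom3 ((e3 : ℤ) - e2 + 3) + 1 := by
    rintro ⟨ρ, h3, g3, hn⟩
    have h0 := aux_det_ne hd hf hred.ne_zero h1 h2 h3 (fun hm => hn (htame ρ h3 e3 g3 hm))
    obtain ⟨k, hk, hdet⟩ := aux_det_eq hf hred h1 h2 h3 g1 g2 g3 he3 h0
    have hs := aux_saito_span hd hf hred h1 h2 h3 hk hdet
    have hi := aux_indep h0
    exact ⟨⟨l12, he23, ρ1, ρ2, ρ, h1, h2, h3, g1, g2, g3, hs, hi⟩,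
      aux_exact h1 h2 h3 g1 g2 g3 l13 he23 hs hi⟩
  have hii : binom3 ((e3 : ℤ) - e1 + 3) + binom3 ((e3 : ℤ) - e2 + 3) < arDim f e3 →
      ∃ ρ ∈ AR4 f, VecHomog ρ e3 ∧ ¬ ∃ a b : S4, ρ = a • ρ1 + b • ρ2 := by
    intro hlt
    by_contra hcon
    refine absurd hlt (not_lt.2 (aux_upper g1 g2 l13 he23 ?_))
    intro ρ hρ hg
    by_contra hn
    exact hcon ⟨ρ, hρ, hg, hn⟩
  have hfr : IsFreeWith f e1 e2 e3 → _ := aux_free_iv ρ1 ρ2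
  refine ⟨⟨fun h => ?_, fun h => (hiv (hii h)).1⟩, ⟨fun h => (hiv (hfr h)).2, fun h => ?_⟩,
    ⟨hfr, fun h => (hiv h).1⟩⟩
  · rw [(hiv (hfr h)).2]; exact Nat.lt_succ_self _
  · exact (hiv (hii (by rw [h]; exact Nat.lt_succ_self _))).1
end
end

section
/- Let f ∈ ℂ[x,y,z,w] be a reduced homogeneous polynomial of degree d defining a surface D: f = 0 in P³, tame with respect to the pair ρ1, ρ2 of degrees e1 ≤ e2, and set e3 = d − 1 − e1 − e2 with e3 ≥ e2. Then D is a free surface with exponents e1, e2, e3 if and only if for every k ≥ e3 one has ar(f)_k ≥ binom(k−e1+3,3) + binom(k−e2+3,3) + binom(k−e3+3,3), and in that case equality ar(f)_k = binom(k−e1+3,3) + binom(k−e2+3,3) + binom(k−e3+3,3) holds for every k ≥ e3 (with binom(m,3) = 0 for m < 3). -/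
open MvPolynomial Matrix

noncomputable section

/-- A nonzero polynomial dividing all its partial derivatives is a unit. -/
lemma isUnit_of_dvd_pderiv (h : S4) (h0 : h ≠ 0) (hh : ∀ j, h ∣ pderiv j h) : IsUnit h := by
  by_contra hu
  have hdeg : 0 < h.totalDegree := by
    rw [Nat.pos_iff_ne_zero]
    intro hz
    rw [totalDegree_eq_zero_iff_eq_C] at hz
    apply hu
    rw [hz]
    refine (IsUnit.mk0 _ ?_).map C
    intro hc
    rw [hc] at hz
    exact h0 (by simpa using hz)
  have hne : h.support.Nonempty := by simpa [Finset.nonempty_iff_ne_empty] using h0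
  obtain ⟨s, hs, hsd⟩ := Finset.exists_mem_eq_sup h.support hne (fun s => s.sum fun _ e => e)
  have hsd' : h.totalDegree = s.sum fun _ e => e := hsd
  obtain ⟨i, hi⟩ : ∃ i, s i ≠ 0 := by
    by_contra hcon
    push Not at hcon
    have : s = 0 := Finsupp.ext hcon
    rw [this] at hsd'
    simp at hsd'
    omega
  have hp : pderiv i h ≠ 0 := by
    intro hz
    have := coeff_pderiv (i := i) h (s - Finsupp.single i 1)
    rw [hz, Finsupp.sub_add_single_one_cancel hi] at this
    have h2 : coeff s h ≠ 0 := by simpa using hs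
    simp only [coeff_zero] at this
    have h3 := this.symm
    rw [mul_eq_zero] at h3
    rcases h3 with h3 | h3
    · exact h2 h3
    · exact Nat.cast_add_one_ne_zero _ h3
  have hle := totalDegree_le_of_dvd_of_isDomain (hh i) hp
  have hlt : (pderiv i h).totalDegree + 1 ≤ h.totalDegree := by
    have : (pderiv i h).totalDegree ≤ h.totalDegree - 1 := by
      rw [totalDegree, Finset.sup_le_iff]
      intro m hm
      have hm' : coeff (m + Finsupp.single i 1) h ≠ 0 := by
        intro hz
        rw [mem_support_iff, coeff_pderiv, hz] at hm
        simp at hm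
      have := le_totalDegree (mem_support_iff.mpr hm')
      rw [Finsupp.sum_add_index' (by simp) (by simp)] at this
      simp at this
      omega
    omega
  omega

/-- If the squarefree `f` divides `D f_j` for all `j` then `f ∣ D`. -/
lemma dvd_of_dvd_mul_pderiv (f D : S4) (hred : Squarefree f)
    (hD : ∀ j, f ∣ D * pderiv j f) : f ∣ D := by
  have hf0 : f ≠ 0 := hred.ne_zero
  obtain ⟨h, D', g, hrel, hfe, hDe⟩ := UniqueFactorizationMonoid.exists_reduced_factors f hf0 D
  have hg : g ≠ 0 := by rintro rfl; simp at hfe; exact hf0 hfe.symm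
  have hh : h ≠ 0 := by rintro rfl; simp at hfe; exact hf0 hfe.symm
  have hgh : IsRelPrime g h := by
    rw [← hfe] at hred
    exact (squarefree_mul_iff.mp hred).1
  have hu : IsUnit h := by
    apply isUnit_of_dvd_pderiv h hh
    intro j
    have h1 := hD j
    rw [← hDe] at h1
    nth_rw 1 [← hfe] at h1
    rw [mul_assoc] at h1
    have h2 := (mul_dvd_mul_iff_left hg).mp h1
    have h3 : h ∣ pderiv j f := hrel.dvd_of_dvd_mul_left h2
    rw [← hfe, pderiv_mul] at h3
    have h4 : h ∣ g * pderiv j h := (dvd_add_right (Dvd.intro_left _ rfl)).mp h3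
    exact hgh.symm.dvd_of_dvd_mul_left h4
  rw [← hfe, ← hDe]
  exact mul_dvd_mul_left g (hu.dvd)

/-- The gradient of `f`. -/
def gradV (f : S4) : Fin 4 → S4 := fun j => pderiv j f

lemma dvd_det_of_log (f : S4) (hred : Squarefree f) (A : Matrix (Fin 4) (Fin 4) S4)
    (hA : ∀ i, f ∣ (A *ᵥ gradV f) i) : f ∣ A.det := by
  apply dvd_of_dvd_mul_pderiv f _ hred
  intro j
  have h1 : A.adjugate *ᵥ (A *ᵥ gradV f) = A.det • gradV f := by
    rw [Matrix.mulVec_mulVec, Matrix.adjugate_mul, Matrix.smul_mulVec, Matrix.one_mulVec]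
  have h2 := congrFun h1 j
  have h3 : A.det * pderiv j f = (A.adjugate *ᵥ (A *ᵥ gradV f)) j := by
    rw [h2]; rfl
  rw [h3]
  rw [Matrix.mulVec, dotProduct]
  exact Finset.dvd_sum fun i _ => Dvd.dvd.mul_left (hA i) _

lemma mem_AR4_iff (f : S4) (ρ : Fin 4 → S4) : ρ ∈ AR4 f ↔ ρ ⬝ᵥ gradV f = 0 := by
  rfl

lemma euler_dot (f : S4) (d : ℕ) (hf : f.IsHomogeneous d) :
    (fun i => X i : Fin 4 → S4) ⬝ᵥ gradV f = (d : S4) * f := by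
  have := hf.sum_X_mul_pderiv
  rw [nsmul_eq_mul] at this
  exact this

lemma EMat_mulVec (f : S4) (d : ℕ) (hf : f.IsHomogeneous d) (ρ1 ρ2 ρ3 : Fin 4 → S4)
    (h1 : ρ1 ∈ AR4 f) (h2 : ρ2 ∈ AR4 f) (h3 : ρ3 ∈ AR4 f) :
    EMat ρ1 ρ2 ρ3 *ᵥ gradV f = ![(d : S4) * f, 0, 0, 0] := by
  rw [mem_AR4_iff] at h1 h2 h3
  funext i
  fin_cases i
  · exact euler_dot f d hf
  · exact h1
  · exact h2
  · exact h3

lemma det_EMat_ne_zero (f : S4) (d : ℕ) (hd : 1 ≤ d) (hf : f.IsHomogeneous d) (hf0 : f ≠ 0)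
    (ρ1 ρ2 ρ3 : Fin 4 → S4)
    (h1 : ρ1 ∈ AR4 f) (h2 : ρ2 ∈ AR4 f) (h3 : ρ3 ∈ AR4 f) (hm : ¬ MinorsVanish3 ρ1 ρ2 ρ3) :
    (EMat ρ1 ρ2 ρ3).det ≠ 0 := by
  intro hdet
  apply hm
  intro j
  have e1 : (EMat ρ1 ρ2 ρ3).adjugate *ᵥ (EMat ρ1 ρ2 ρ3 *ᵥ gradV f) = 0 := by
    rw [Matrix.mulVec_mulVec, Matrix.adjugate_mul, hdet, zero_smul, Matrix.zero_mulVec]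
  rw [EMat_mulVec f d hf ρ1 ρ2 ρ3 h1 h2 h3] at e1
  have e2 := congrFun e1 j
  simp only [Matrix.mulVec, dotProduct, Fin.sum_univ_four, Matrix.cons_val, mul_zero, add_zero,
    Pi.zero_apply] at e2
  have hd' : (d : S4) ≠ 0 := by exact_mod_cast (by omega : d ≠ 0)
  have e3 : (EMat ρ1 ρ2 ρ3).adjugate j 0 = 0 := by
    rcases mul_eq_zero.mp e2 with h | h
    · exact h
    · exact absurd h (mul_ne_zero hd' hf0)
  rw [Matrix.adjugate_fin_succ_eq_det_submatrix] at e3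
  have e4 := (mul_eq_zero.mp e3).resolve_left (pow_ne_zero _ (by norm_num))
  rw [← e4]
  congr 1

lemma EMat_det_homog (ρ1 ρ2 ρ3 : Fin 4 → S4) (e1 e2 e3 : ℕ)
    (h1 : VecHomog ρ1 e1) (h2 : VecHomog ρ2 e2) (h3 : VecHomog ρ3 e3) :
    (EMat ρ1 ρ2 ρ3).det.IsHomogeneous (e1 + e2 + e3 + 1) := by
  rw [← Matrix.det_transpose, Matrix.det_apply]
  refine IsHomogeneous.sum _ _ _ fun σ _ => ?_
  have hp : (∏ i, (EMat ρ1 ρ2 ρ3)ᵀ (σ i) i).IsHomogeneous (∑ i, ![1, e1, e2, e3] i) := by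
    refine IsHomogeneous.prod _ _ _ fun i _ => ?_
    fin_cases i
    · exact isHomogeneous_X _ _
    · exact h1 _
    · exact h2 _
    · exact h3 _
  have he : ∑ i, ![1, e1, e2, e3] i = e1 + e2 + e3 + 1 := by
    simp [Fin.sum_univ_four]; ring
  rw [he] at hp
  rcases Int.units_eq_one_or (Equiv.Perm.sign σ) with hs | hs <;> rw [hs]
  · simpa using hp
  · simpa using hp.neg

/-- Saito-type criterion. -/
lemma free_of_minors (f : S4) (d e1 e2 e3 : ℕ) (hd : 1 ≤ d) (hf : f.IsHomogeneous d)
    (hred : Squarefree f) (he3 : e1 + e2 + e3 + 1 = d)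
    (ρ1 ρ2 ρ3 : Fin 4 → S4)
    (h1 : ρ1 ∈ AR4 f) (h2 : ρ2 ∈ AR4 f) (h3 : ρ3 ∈ AR4 f)
    (g1 : VecHomog ρ1 e1) (g2 : VecHomog ρ2 e2) (g3 : VecHomog ρ3 e3)
    (hm : ¬ MinorsVanish3 ρ1 ρ2 ρ3) :
    (∀ ρ ∈ AR4 f, ∃ a b c : S4, ρ = a • ρ1 + b • ρ2 + c • ρ3) ∧
    (∀ a b c : S4, a • ρ1 + b • ρ2 + c • ρ3 = 0 → a = 0 ∧ b = 0 ∧ c = 0) := by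
  have hf0 : f ≠ 0 := hred.ne_zero
  have hdet := det_EMat_ne_zero f d hd hf hf0 ρ1 ρ2 ρ3 h1 h2 h3 hm
  have hlog := EMat_mulVec f d hf ρ1 ρ2 ρ3 h1 h2 h3
  have hcomb : ∀ v : Fin 4 → S4, (EMat ρ1 ρ2 ρ3)ᵀ *ᵥ v =
      v 0 • (fun i => X i) + v 1 • ρ1 + v 2 • ρ2 + v 3 • ρ3 := by
    intro v
    funext i
    simp only [Matrix.mulVec, dotProduct, Fin.sum_univ_four, Matrix.transpose_apply, EMat,
      Matrix.of_apply, Matrix.cons_val, Pi.add_apply, Pi.smul_apply, smul_eq_mul]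
    ring
  constructor
  · intro ρ hρ
    -- `det = c f`
    have hdvd : f ∣ (EMat ρ1 ρ2 ρ3).det := by
      apply dvd_det_of_log f hred
      intro i
      rw [hlog]
      fin_cases i <;> simp
    obtain ⟨q, hq⟩ := hdvd
    have hq0 : q ≠ 0 := by rintro rfl; simp at hq; exact hdet hq
    have hqdeg : q.totalDegree = 0 := by
      have t1 := (EMat_det_homog ρ1 ρ2 ρ3 e1 e2 e3 g1 g2 g3).totalDegree hdet
      rw [hq, totalDegree_mul_of_isDomain hf0 hq0, hf.totalDegree hf0] at t1
      omega
    rw [totalDegree_eq_zero_iff_eq_C] at hqdeg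
    set c := coeff 0 q with hc
    have hc0 : c ≠ 0 := by
      intro h; rw [h] at hqdeg; exact hq0 (by simpa using hqdeg)
    have hcr := Matrix.mulVec_cramer (EMat ρ1 ρ2 ρ3)ᵀ ρ
    rw [hcomb, Matrix.det_transpose] at hcr
    simp only [Matrix.cramer_transpose_apply] at hcr
    have hrow : ∀ i k, (((EMat ρ1 ρ2 ρ3).updateRow i ρ) *ᵥ gradV f) k =
        if k = i then 0 else (![(d : S4) * f, 0, 0, 0] : Fin 4 → S4) k := by
      intro i k
      split_ifs with hk
      · subst hk
        simp only [Matrix.mulVec, Matrix.updateRow_self]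
        exact hρ
      · rw [← hlog]
        simp only [Matrix.mulVec, Matrix.updateRow_ne hk]
    have hv0 : ((EMat ρ1 ρ2 ρ3).updateRow 0 ρ).det = 0 := by
      rw [← Matrix.exists_mulVec_eq_zero_iff]
      refine ⟨gradV f, ?_, ?_⟩
      · intro hz
        have := euler_dot f d hf
        rw [hz, dotProduct_zero] at this
        have hd' : (d : S4) ≠ 0 := by exact_mod_cast (by omega : d ≠ 0)
        exact mul_ne_zero hd' hf0 this.symm
      · funext k
        rw [hrow]
        fin_cases k <;> simp
    have hvd : ∀ i, f ∣ ((EMat ρ1 ρ2 ρ3).updateRow i ρ).det := by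
      intro i
      apply dvd_det_of_log f hred
      intro k
      rw [hrow]
      split_ifs
      · simp
      · fin_cases k <;> simp
    choose w hw using hvd
    rw [hv0, hw 1, hw 2, hw 3, hq, hqdeg] at hcr
    refine ⟨C c⁻¹ * w 1, C c⁻¹ * w 2, C c⁻¹ * w 3, ?_⟩
    have hCC : (C c⁻¹ : S4) * C c = 1 := by
      rw [← C_mul, inv_mul_cancel₀ hc0, C_1]
    funext i
    have hi := congrFun hcr i
    simp only [Pi.add_apply, Pi.smul_apply, smul_eq_mul] at hi ⊢
    apply mul_left_cancel₀ hf0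
    linear_combination (-f * ρ i) * hCC - C c⁻¹ * hi
  · intro a b c habc
    have := Matrix.eq_zero_of_mulVec_eq_zero (M := (EMat ρ1 ρ2 ρ3)ᵀ) (v := ![0, a, b, c])
      (by rwa [Matrix.det_transpose]) (by rw [hcomb]; simpa using habc)
    refine ⟨?_, ?_, ?_⟩
    · simpa using congrFun this 1
    · simpa using congrFun this 2
    · simpa using congrFun this 3

/-! Dimension counts -/

lemma finrank_homog (m : ℕ) :
    Module.finrank ℂ (homogeneousSubmodule (Fin 4) ℂ m) = (m + 3).choose 3 := by
  rw [homogeneousSubmodule_eq_finsupp_supported]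
  rw [(AddMonoidAlgebra.supportedEquivFinsupp (R := ℂ) (S := ℂ)
    {d : Fin 4 →₀ ℕ | d.degree = m}).finrank_eq]
  have hset : {d : Fin 4 →₀ ℕ | d.degree = m} =
      ((Finset.univ : Finset (Fin 4)).finsuppAntidiag m : Set (Fin 4 →₀ ℕ)) := by
    ext d
    simp [Finset.mem_finsuppAntidiag, Finsupp.degree_eq_sum]
  rw [hset, Module.finrank_finsupp_self, ← Nat.card_eq_fintype_card, Nat.card_coe_set_eq,
    Set.ncard_coe_finset, Finset.card_finsuppAntidiag_nat_eq_choose]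
  simp only [Finset.card_univ, Fintype.card_fin]
  rw [show 4 + m - 1 = m + 3 by omega, ← Nat.choose_symm_add]

instance homogFin (m : ℕ) : Module.Finite ℂ (homogeneousSubmodule (Fin 4) ℂ m) :=
  Module.Finite.iff_fg.mpr (homogeneousSubmodule_fg _ _ m)

lemma homogComp_mul (a r : S4) (e k : ℕ) (hr : r.IsHomogeneous e) (hek : e ≤ k) :
    homogeneousComponent k (a * r) = homogeneousComponent (k - e) a * r := by
  let _ := MvPolynomial.gradedAlgebra (σ := Fin 4) (R := ℂ)
  have := DirectSum.coe_decompose_mul_of_right_mem_of_le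
    (𝒜 := homogeneousSubmodule (Fin 4) ℂ) (a := a) (b := r) (i := e) (n := k) hr hek
  have e : ∀ (x : S4) (n : ℕ), (DirectSum.decompose (homogeneousSubmodule (Fin 4) ℂ) x n : S4) =
      homogeneousComponent n x := fun x n => decomposition.decompose'_apply x n
  rwa [e, e] at this

lemma binom3_eq (k e : ℕ) (h : e ≤ k) : binom3 ((k : ℤ) - e + 3) = (k - e + 3).choose 3 := by
  unfold binom3
  congr 1
  omega

/-- Multiplication of a vector by homogeneous polynomials, as a linear map. -/
def mulMap (m : ℕ) (ρ : Fin 4 → S4) : homogeneousSubmodule (Fin 4) ℂ m →ₗ[ℂ] (Fin 4 → S4) where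
  toFun a := (a : S4) • ρ
  map_add' a b := by simp [add_smul]
  map_smul' c a := by simp [smul_assoc]

lemma mem_ARgr (f : S4) (k : ℕ) (ρ : Fin 4 → S4) :
    ρ ∈ ARgr f k ↔ ρ ∈ AR4 f ∧ VecHomog ρ k := by
  simp [ARgr, VecHomog, Submodule.mem_pi]

lemma smul_mem_ARgr (f : S4) (k e : ℕ) (hek : e ≤ k) (ρ : Fin 4 → S4) (h : ρ ∈ AR4 f)
    (hh : VecHomog ρ e) (a : S4) (ha : a.IsHomogeneous (k - e)) : a • ρ ∈ ARgr f k := by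
  rw [mem_ARgr]
  refine ⟨Submodule.smul_mem _ _ h, fun i => ?_⟩
  have := ha.mul (hh i)
  rwa [Nat.sub_add_cancel hek] at this

lemma arDim_of_free (f : S4) (e1 e2 e3 : ℕ) (h : IsFreeWith f e1 e2 e3) (k : ℕ) (hk : e3 ≤ k) :
    arDim f k = (k - e1 + 3).choose 3 + (k - e2 + 3).choose 3 + (k - e3 + 3).choose 3 := by
  obtain ⟨h12, h23, ρ1, ρ2, ρ3, m1, m2, m3, g1, g2, g3, hgen, hind⟩ := h
  let φ := (mulMap (k - e1) ρ1).coprod ((mulMap (k - e2) ρ2).coprod (mulMap (k - e3) ρ3))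
  have hφ : ∀ x, φ x = (x.1 : S4) • ρ1 + (x.2.1 : S4) • ρ2 + (x.2.2 : S4) • ρ3 := by
    intro x
    simp [φ, mulMap, add_assoc]
  have hinj : Function.Injective φ := by
    rw [← LinearMap.ker_eq_bot, LinearMap.ker_eq_bot']
    intro x hx
    rw [hφ] at hx
    obtain ⟨p1, p2, p3⟩ := hind _ _ _ hx
    ext1
    · exact Subtype.ext p1
    · ext1
      · exact Subtype.ext p2
      · exact Subtype.ext p3
  have hrange : LinearMap.range φ = ARgr f k := by
    apply le_antisymm
    · rintro _ ⟨x, rfl⟩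
      rw [hφ]
      exact add_mem (add_mem (smul_mem_ARgr f k e1 (by omega) ρ1 m1 g1 _ x.1.2)
        (smul_mem_ARgr f k e2 (by omega) ρ2 m2 g2 _ x.2.1.2))
        (smul_mem_ARgr f k e3 (by omega) ρ3 m3 g3 _ x.2.2.2)
    · intro ρ hρ
      rw [mem_ARgr] at hρ
      obtain ⟨a, b, c, habc⟩ := hgen ρ hρ.1
      refine ⟨(⟨_, homogeneousComponent_mem (k - e1) a⟩,
        ⟨_, homogeneousComponent_mem (k - e2) b⟩, ⟨_, homogeneousComponent_mem (k - e3) c⟩), ?_⟩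
      rw [hφ]
      funext i
      have hi := homogeneousComponent_eq_self (hρ.2 i)
      rw [← hi]
      conv_rhs => rw [habc]
      simp only [Pi.add_apply, Pi.smul_apply, smul_eq_mul, map_add]
      rw [homogComp_mul a _ e1 k (g1 i) (by omega), homogComp_mul b _ e2 k (g2 i) (by omega),
        homogComp_mul c _ e3 k (g3 i) (by omega)]
  unfold arDim
  rw [← hrange, LinearMap.finrank_range_of_inj hinj, Module.finrank_prod, Module.finrank_prod,
    finrank_homog, finrank_homog, finrank_homog, add_assoc]

lemma exists_third (f : S4) (e1 e2 e3 : ℕ) (ρ1 ρ2 : Fin 4 → S4)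
    (g1 : VecHomog ρ1 e1) (g2 : VecHomog ρ2 e2) (h12 : e1 ≤ e2) (h23 : e2 ≤ e3)
    (h : (e3 - e1 + 3).choose 3 + (e3 - e2 + 3).choose 3 + 1 ≤ arDim f e3) :
    ∃ ρ3 ∈ AR4 f, VecHomog ρ3 e3 ∧ ¬ ∃ a b : S4, ρ3 = a • ρ1 + b • ρ2 := by
  by_contra hcon
  push Not at hcon
  let φ := (mulMap (e3 - e1) ρ1).coprod (mulMap (e3 - e2) ρ2)
  have hle : ARgr f e3 ≤ LinearMap.range φ := by
    intro ρ hρ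
    rw [mem_ARgr] at hρ
    obtain ⟨a, b, hab⟩ := hcon ρ hρ.1 hρ.2
    refine ⟨(⟨_, homogeneousComponent_mem (e3 - e1) a⟩,
      ⟨_, homogeneousComponent_mem (e3 - e2) b⟩), ?_⟩
    funext i
    have hi := homogeneousComponent_eq_self (hρ.2 i)
    rw [← hi]
    conv_rhs => rw [hab]
    simp only [Pi.add_apply, Pi.smul_apply, smul_eq_mul, map_add]
    rw [homogComp_mul a _ e1 e3 (g1 i) (by omega), homogComp_mul b _ e2 e3 (g2 i) (by omega)]
    simp [φ, mulMap]
  have h1 := Submodule.finrank_mono hle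
  have h2 := LinearMap.finrank_range_le φ
  rw [Module.finrank_prod, finrank_homog, finrank_homog] at h2
  unfold arDim at h
  omega

/-- **Corollary 3.4 (second part).** `D` is free with exponents `e1, e2, e3` iff for all
`k ≥ e3` the dimension `ar(f)_k` is at least the expected free value, and in that case
equality holds for all `k ≥ e3`. -/
theorem cor_3_4_b (f : S4) (d e1 e2 e3 : ℕ) (ρ1 ρ2 : Fin 4 → S4)
    (hd : 1 ≤ d) (hf : f.IsHomogeneous d) (hred : Squarefree f)
    (hmin : MinimalPair f ρ1 ρ2 e1 e2) (htame : TamePair f ρ1 ρ2)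
    (he3 : e1 + e2 + e3 + 1 = d) (he23 : e2 ≤ e3) :
    (IsFreeWith f e1 e2 e3 ↔
      ∀ k : ℕ, e3 ≤ k →
        binom3 ((k : ℤ) - e1 + 3) + binom3 ((k : ℤ) - e2 + 3) + binom3 ((k : ℤ) - e3 + 3) ≤
          arDim f k) ∧
    (IsFreeWith f e1 e2 e3 →
      ∀ k : ℕ, e3 ≤ k →
        arDim f k =
          binom3 ((k : ℤ) - e1 + 3) + binom3 ((k : ℤ) - e2 + 3) +
            binom3 ((k : ℤ) - e3 + 3)) := by
  have key : IsFreeWith f e1 e2 e3 → ∀ k : ℕ, e3 ≤ k →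
        arDim f k =
          binom3 ((k : ℤ) - e1 + 3) + binom3 ((k : ℤ) - e2 + 3) +
            binom3 ((k : ℤ) - e3 + 3) := by
    intro h k hk
    have h12 := h.1
    rw [binom3_eq k e1 (by omega), binom3_eq k e2 (by omega), binom3_eq k e3 hk]
    exact arDim_of_free f e1 e2 e3 h k hk
  refine ⟨⟨fun h k hk => (key h k hk).ge, fun h => ?_⟩, key⟩
  obtain ⟨m1, _, g1, _, m2, g2, h12, _, _⟩ := hmin
  have h3 := h e3 le_rfl
  rw [binom3_eq e3 e1 (by omega), binom3_eq e3 e2 he23, binom3_eq e3 e3 le_rfl] at h3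
  obtain ⟨ρ3, m3, g3, hn⟩ := exists_third f e1 e2 e3 ρ1 ρ2 g1 g2 h12 he23 (by simpa using h3)
  have hm : ¬ MinorsVanish3 ρ1 ρ2 ρ3 := fun hm => hn (htame ρ3 m3 e3 g3 hm)
  obtain ⟨q1, q2⟩ := free_of_minors f d e1 e2 e3 hd hf hred he3 ρ1 ρ2 ρ3 m1 m2 m3 g1 g2 g3 hm
  exact ⟨h12, he23, ρ1, ρ2, ρ3, m1, m2, m3, g1, g2, g3, q1, q2⟩
end
end
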